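/- arXiv:1902.10512 — 3 statements merged into one kernel-verified Lean document; each statement's English description precedes it below -/
import Mathlib

section
/- Let d be an odd integer with 1 ≤ d ≤ 2l−1 and d ≠ l. Then q · J_{2l²}(1, dl) = J_{2l²}(1, l²) · J_{2l²}(dl, l²) · conj(J_{2l²}(1+dl, l²−1)), where conj denotes complex conjugation. -/
open Complex Finset

/-- The `i`-th power character: `χ^i(v) = χ(v)^i` for `v ≠ 0`, with the convention
`χ^i(0) = 0` (in particular `χ^0(0) = 0`). -/
noncomputable def charPow {F : Type*} [DecidableEq F] [Zero F] (χ : F → ℂ) (i : ℤ) (v : F) : ℂ :=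
  if v = 0 then 0 else χ v ^ i

/-- The Jacobi sum `J_e(i,j) = ∑_{v ∈ F_q} χ_e^i(v) χ_e^j(v+1)`. -/
noncomputable def jSum {F : Type*} [Field F] [Fintype F] [DecidableEq F]
    (χ : F → ℂ) (i j : ℤ) : ℂ :=
  ∑ v : F, charPow χ i v * charPow χ j (v + 1)

/-!
Writing `J` for `jacobiSum`, regrouping the sum of `A x * B y * C z` over `x + y + z = 1` in two
ways gives the cocycle relation `J A B * J (A * B) C = J A (B * C) * J B C`. Taking `Y`, `X`,
`Q / X` for `A`, `B`, `C`, it reads `J Y X * J (Y * X) (Q / X) = J Y Q * J X (Q / X)`. The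
substitution `x ↦ x / (x - 1)` turns `J X (Q / X)` into `X (-1) * J X Q⁻¹`, where `Q⁻¹ = Q` for
quadratic `Q`, and multiplication by the conjugate of `J (Y * X) (Q / X)` replaces that factor by
`q`. The formula is the case `X = χ`, `Y = χ ^ (d * l)`, `Q = χ ^ (l ^ 2)`.
-/

section CommRing

variable {F R : Type*} [Field F] [Fintype F] [CommRing R]

lemma jacobiSum_eq_apply_neg_one_mul_jacobiSum_inv (A B : MulChar F R) :
    jacobiSum A B = A (-1) * jacobiSum A (A * B)⁻¹ := by
  classical
  have mem_iff (x : F) : x ∈ univ \ {0, 1} ↔ x ≠ 0 ∧ x - 1 ≠ 0 := by simp [sub_eq_zero]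
  have sub_one_eq {x : F} (hx : x - 1 ≠ 0) : x / (x - 1) - 1 = 1 / (x - 1) := by
    rw [div_sub_one hx, sub_sub_cancel]
  have maps_to (x : F) (hx : x ∈ univ \ {0, 1}) : x / (x - 1) ∈ univ \ {0, 1} := by
    obtain ⟨hx₀, hx₁⟩ := (mem_iff x).1 hx
    exact (mem_iff _).2 ⟨div_ne_zero hx₀ hx₁, (sub_one_eq hx₁).trans_ne (one_div_ne_zero hx₁)⟩
  have involutive (x : F) (hx : x ∈ univ \ {0, 1}) :
      x / (x - 1) / (x / (x - 1) - 1) = x := by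
    obtain ⟨-, hx₁⟩ := (mem_iff x).1 hx
    rw [sub_one_eq hx₁, div_div_div_cancel_right₀ hx₁, div_one]
  rw [jacobiSum_eq_sum_sdiff, jacobiSum_eq_sum_sdiff, mul_sum]
  refine sum_nbij' (fun x ↦ x / (x - 1)) (fun x ↦ x / (x - 1)) maps_to maps_to involutive
    involutive fun x hx ↦ ?_
  obtain ⟨-, hx₁⟩ := (mem_iff x).1 hx
  have inv_one_sub : (1 - x / (x - 1))⁻¹ = -1 * (x - 1) := by
    rw [one_sub_div hx₁, inv_div]
    ring
  have neg_one_mul_div_mul : -1 * (x / (x - 1)) * (-1 * (x - 1)) = x := by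
    field_simp
  calc A x * B (1 - x)
      = A (-1 * (x / (x - 1)) * (-1 * (x - 1))) * B (-1 * (x - 1)) := by
        rw [neg_one_mul_div_mul, neg_one_mul, neg_sub]
    _ = A (-1) * (A (x / (x - 1)) * (A * B)⁻¹ (1 - x / (x - 1))) := by
        rw [MulChar.inv_apply', inv_one_sub, MulChar.mul_apply, map_mul A (-1 * (x / (x - 1))),
          map_mul A (-1) (x / (x - 1))]
        ring

variable [IsDomain R]

lemma sum_mul_apply_sub_eq_mul_jacobiSum {A B : MulChar F R} (hAB : A * B ≠ 1) (s : F) :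
    ∑ x, A x * B (s - x) = (A * B) s * jacobiSum A B := by
  rcases eq_or_ne s 0 with rfl | hs
  · calc ∑ x, A x * B (0 - x) = B (-1) * ∑ x, (A * B) x := by
          rw [mul_sum]
          refine sum_congr rfl fun x _ ↦ ?_
          rw [zero_sub, ← neg_one_mul x, map_mul, MulChar.mul_apply, mul_left_comm]
      _ = (A * B) 0 * jacobiSum A B := by
          rw [MulChar.sum_eq_zero_of_ne_one hAB, MulChar.map_zero, mul_zero, zero_mul]
  · rw [← Equiv.sum_comp (Equiv.mulLeft₀ s hs), jacobiSum, mul_sum]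
    refine sum_congr rfl fun x _ ↦ ?_
    rw [Equiv.mulLeft₀_apply, ← mul_one_sub, map_mul, map_mul, MulChar.mul_apply, mul_mul_mul_comm]

lemma jacobiSum_mul_jacobiSum_mul_eq_sum {A B : MulChar F R} (hAB : A * B ≠ 1)
    (C : MulChar F R) :
    jacobiSum A B * jacobiSum (A * B) C = ∑ x, ∑ y, A x * B y * C (1 - x - y) := by
  calc jacobiSum A B * jacobiSum (A * B) C
      = ∑ s, (∑ x, A x * B (s - x)) * C (1 - s) := by
        simp only [sum_mul_apply_sub_eq_mul_jacobiSum hAB, jacobiSum.eq_1 (A * B), mul_sum]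
        exact sum_congr rfl fun s _ ↦ by ring
    _ = ∑ x, ∑ s, A x * B (s - x) * C (1 - s) := by
        simp only [sum_mul]
        exact sum_comm
    _ = ∑ x, ∑ y, A x * B y * C (1 - x - y) := by
        refine sum_congr rfl fun x _ ↦ ?_
        rw [← Equiv.sum_comp (Equiv.addLeft x)]
        simp only [Equiv.coe_addLeft, add_sub_cancel_left, sub_sub]

theorem jacobiSum_mul_jacobiSum_assoc {A B C : MulChar F R} (hAB : A * B ≠ 1) (hBC : B * C ≠ 1) :
    jacobiSum A B * jacobiSum (A * B) C = jacobiSum A (B * C) * jacobiSum B C := by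
  calc jacobiSum A B * jacobiSum (A * B) C
      = ∑ y, ∑ x, A x * B y * C (1 - x - y) := by
        rw [jacobiSum_mul_jacobiSum_mul_eq_sum hAB, sum_comm]
    _ = ∑ y, ∑ z, B y * C z * A (1 - y - z) := by
        refine sum_congr rfl fun y _ ↦ ?_
        rw [← Equiv.sum_comp (Equiv.subLeft (1 - y))]
        refine sum_congr rfl fun z _ ↦ ?_
        rw [Equiv.subLeft_apply, show 1 - (1 - y - z) - y = z by ring]
        ring
    _ = jacobiSum A (B * C) * jacobiSum B C := by
        rw [← jacobiSum_mul_jacobiSum_mul_eq_sum hBC, jacobiSum_comm A, mul_comm]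

end CommRing

theorem card_mul_jacobiSum_eq {F F' : Type*} [Field F] [Fintype F] [Field F']
    (hchar : ringChar F' ≠ ringChar F) {X Y Q : MulChar F F'} (hXY : X * Y ≠ 1) (hQ : Q ≠ 1)
    (hQX : Q / X ≠ 1) (hYQ : Y * Q ≠ 1) :
    Fintype.card F * jacobiSum X Y =
      X (-1) * jacobiSum X Q⁻¹ * jacobiSum Y Q * jacobiSum (X * Y)⁻¹ (Q / X)⁻¹ := by
  have hYX : Y * X ≠ 1 := by rwa [mul_comm]
  have mul_div_X : X * (Q / X) = Q := mul_div_cancel X Q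
  have card_eq : jacobiSum (X * Y) (Q / X) * jacobiSum (X * Y)⁻¹ (Q / X)⁻¹ = Fintype.card F :=
    jacobiSum_mul_jacobiSum_inv hchar hXY hQX (by rwa [mul_comm X, mul_assoc, mul_div_X])
  have cocycle : jacobiSum X Y * jacobiSum (X * Y) (Q / X) =
      jacobiSum Y Q * jacobiSum X (Q / X) := by
    have h := jacobiSum_mul_jacobiSum_assoc hYX (mul_div_X.trans_ne hQ)
    rwa [mul_div_X, jacobiSum_comm Y X, mul_comm Y X] at h
  have reflect : jacobiSum X (Q / X) = X (-1) * jacobiSum X Q⁻¹ := by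
    rw [jacobiSum_eq_apply_neg_one_mul_jacobiSum_inv, mul_div_X]
  rw [← card_eq, mul_comm, ← mul_assoc, cocycle, reflect]
  ring

lemma conj_jacobiSum {R : Type*} [CommRing R] [Fintype R] (A B : MulChar R ℂ) :
    starRingEnd ℂ (jacobiSum A B) = jacobiSum A⁻¹ B⁻¹ := by
  simp only [jacobiSum, map_sum, map_mul, starRingEnd_apply, MulChar.star_apply']

section JSum

variable {F : Type*} [Field F] [DecidableEq F]

lemma charPow_coe_mulChar (X : MulChar F ℂ) (i : ℤ) (v : F) : charPow X i v = (X ^ i) v := by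
  rw [charPow]
  split_ifs with hv
  · rw [hv, MulChar.map_zero]
  · have map_inv (x : F) : X x⁻¹ = (X x)⁻¹ := by
      rw [← MulChar.inv_apply', MulChar.inv_apply_eq_inv']
    rw [← map_zpow' X map_inv, ← Units.val_mk0 hv, ← Units.val_zpow_eq_zpow_val,
      MulChar.zpow_apply_coe]

variable [Fintype F]

lemma jSum_coe_mulChar (X : MulChar F ℂ) (i j : ℤ) :
    jSum X i j = (X ^ i) (-1) * jacobiSum (X ^ i) (X ^ j) := by
  simp only [jSum, charPow_coe_mulChar]
  rw [← Equiv.sum_comp (Equiv.neg F), jacobiSum, mul_sum]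
  refine sum_congr rfl fun v _ ↦ ?_
  rw [Equiv.neg_apply, neg_add_eq_sub, ← neg_one_mul, map_mul, mul_assoc]

theorem card_mul_jSum_eq {X : MulChar F ℂ} {i j k : ℤ} (hk : X ^ k ≠ 1)
    (hk_sq : X ^ (2 * k) = 1) (hij : X ^ (i + j) ≠ 1) (hki : X ^ (k - i) ≠ 1)
    (hjk : X ^ (j + k) ≠ 1) :
    (Fintype.card F : ℂ) * jSum X i j =
      jSum X i k * jSum X j k * starRingEnd ℂ (jSum X (i + j) (k - i)) := by
  have hchar : ringChar ℂ ≠ ringChar F := by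
    rw [ringChar.eq_zero]
    exact (CharP.ringChar_ne_zero_of_finite F).symm
  have inv_eq_self : (X ^ k)⁻¹ = X ^ k := by
    rw [inv_eq_iff_mul_eq_one, ← zpow_add, ← two_mul, hk_sq]
  have apply_neg_one_mul_self : (X ^ j) (-1) * (X ^ j) (-1) = 1 := by
    rw [← map_mul, neg_one_mul, neg_neg, map_one]
  have jacobi := card_mul_jacobiSum_eq hchar (X := X ^ i) (Y := X ^ j) (Q := X ^ k)
    (by rwa [← zpow_add]) hk (by rwa [div_eq_mul_inv, ← zpow_sub]) (by rwa [← zpow_add])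
  have conj_apply_neg_one : starRingEnd ℂ ((X ^ i * X ^ j) (-1)) = (X ^ i * X ^ j) (-1) := by
    rw [starRingEnd_apply, MulChar.star_apply', MulChar.inv_apply', inv_neg_one]
  simp only [jSum_coe_mulChar, zpow_add, zpow_sub, ← div_eq_mul_inv]
  rw [map_mul, conj_jacobiSum, conj_apply_neg_one, mul_left_comm, jacobi,
    inv_eq_self, MulChar.mul_apply, ← mul_one ((X ^ i) (-1) * _), ← apply_neg_one_mul_self]
  ring

end JSum

lemma exists_mulChar_coe_eq {F R : Type*} [CommGroupWithZero F] [CommMonoidWithZero R]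
    {χ : F → R} (hzero : χ 0 = 0) (hmul : ∀ x y, χ (x * y) = χ x * χ y) {x : F}
    (hx : IsUnit (χ x)) :
    ∃ X : MulChar F R, ⇑X = χ := by
  have hone : χ 1 = 1 := hx.mul_left_cancel (by rw [← hmul, mul_one, mul_one])
  refine ⟨⟨⟨⟨χ, hone⟩, hmul⟩, fun a ha ↦ ?_⟩, rfl⟩
  rw [isUnit_iff_ne_zero, not_not] at ha
  exact ha ▸ hzero

lemma orderOf_mulChar_eq_orderOf_apply {M R : Type*} [CommMonoid M] [CommMonoidWithZero R]
    {g : Mˣ} (hg : ∀ x, x ∈ Subgroup.zpowers g) (X : MulChar M R) :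
    orderOf X = orderOf (X g) := by
  refine orderOf_eq_orderOf_iff.2 fun n ↦ ?_
  rw [MulChar.eq_iff hg, MulChar.pow_apply_coe, MulChar.one_apply_coe]

lemma exists_mulChar_coe_eq_and_orderOf_eq {F R : Type*} [CommGroupWithZero F]
    [CommMonoidWithZero R] [Nontrivial R] {χ : F → R} (hzero : χ 0 = 0)
    (hmul : ∀ x y, χ (x * y) = χ x * χ y) {γ : F} (hγ : ∀ x, x ≠ 0 → ∃ k : ℕ, γ ^ k = x)
    {n : ℕ} (hn : n ≠ 0) (hprim : IsPrimitiveRoot (χ γ) n) :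
    ∃ X : MulChar F R, ⇑X = χ ∧ orderOf X = n := by
  have hγ₀ : γ ≠ 0 := by
    rintro rfl
    exact hprim.ne_zero hn hzero
  have mem_zpowers (x : Fˣ) : x ∈ Subgroup.zpowers (Units.mk0 γ hγ₀) := by
    obtain ⟨k, hk⟩ := hγ x x.ne_zero
    exact ⟨k, Units.ext (by simpa using hk)⟩
  obtain ⟨X, rfl⟩ := exists_mulChar_coe_eq hzero hmul (hprim.isUnit hn)
  exact ⟨X, rfl, (orderOf_mulChar_eq_orderOf_apply mem_zpowers X).trans hprim.eq_orderOf.symm⟩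

theorem jacobiSum_dl_formula_general {F : Type*} [Field F] [Fintype F] [DecidableEq F]
    {l : ℕ} (hl : 2 ≤ l) {X : MulChar F ℂ} (hX : orderOf X = 2 * l ^ 2) {d : ℤ}
    (hd : ¬ (2 * l : ℤ) ∣ d - l) :
    (Fintype.card F : ℂ) * jSum X 1 (d * l) =
      jSum X 1 ((l : ℤ) ^ 2) * jSum X (d * l) ((l : ℤ) ^ 2) *
        starRingEnd ℂ (jSum X (1 + d * l) ((l : ℤ) ^ 2 - 1)) := by
  have zpow_eq_one_iff (n : ℤ) : X ^ n = 1 ↔ (2 * l ^ 2 : ℤ) ∣ n := by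
    rw [← orderOf_dvd_iff_zpow_eq_one, hX]
    norm_cast
  have not_dvd_one : ¬ (l : ℤ) ∣ 1 := by
    rw [Int.natCast_dvd_ofNat, Nat.dvd_one]
    lia
  have dvd_of_zpow_eq_one {n : ℤ} (h : X ^ n = 1) : (l : ℤ) ∣ n :=
    dvd_trans ⟨2 * l, by ring⟩ ((zpow_eq_one_iff n).1 h)
  refine card_mul_jSum_eq (fun h ↦ ?_) ((zpow_eq_one_iff _).2 dvd_rfl) (fun h ↦ ?_) (fun h ↦ ?_)
    (fun h ↦ ?_)
  · have := Int.le_of_dvd (by positivity) ((zpow_eq_one_iff _).1 h)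
    nlinarith
  · exact not_dvd_one ((dvd_add_left (dvd_mul_left ..)).1 (dvd_of_zpow_eq_one h))
  · exact not_dvd_one ((dvd_sub_right (dvd_pow_self _ two_ne_zero)).1 (dvd_of_zpow_eq_one h))
  · have dvd_add : (2 * l : ℤ) ∣ d + l := by
      refine Int.dvd_of_mul_dvd_mul_left (a := l) (by lia) ?_
      convert (zpow_eq_one_iff _).1 h using 1 <;> ring
    have sub_eq : d - l = d + l - 2 * l := by ring
    exact hd (sub_eq ▸ dvd_sub dvd_add dvd_rfl)

theorem jacobiSum_dl_formula {F : Type*} [Field F] [Fintype F] [DecidableEq F]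
    (l p r q : ℕ) (hl : l.Prime) (hl3 : 3 ≤ l) (hp : p.Prime) (hr : 0 < r)
    (hq : q = p ^ r) (hql : q % (2 * l ^ 2) = 1) (hcard : Fintype.card F = q)
    (γ : F) (hγ : ∀ x : F, x ≠ 0 → ∃ k : ℕ, γ ^ k = x)
    (ζ : ℂ) (hζ : ζ = Complex.exp (2 * Real.pi * Complex.I / ((2 * l ^ 2 : ℕ) : ℂ)))
    (ζl : ℂ) (hζl : ζl = ζ ^ 2)
    (χ : F → ℂ) (hχ0 : χ 0 = 0) (hχγ : χ γ = ζ)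
    (hχmul : ∀ x y : F, χ (x * y) = χ x * χ y)
    (d : ℤ) (hd1 : 1 ≤ d) (hd2 : d ≤ 2 * (l : ℤ) - 1) (hdodd : Odd d) (hdl : d ≠ (l : ℤ)) :
    (q : ℂ) * jSum χ 1 (d * l) =
      jSum χ 1 ((l : ℤ) ^ 2) * jSum χ (d * l) ((l : ℤ) ^ 2) *
        (starRingEnd ℂ) (jSum χ (1 + d * l) ((l : ℤ) ^ 2 - 1)) := by
  have hn : 2 * l ^ 2 ≠ 0 := by positivity
  have hprim : IsPrimitiveRoot (χ γ) (2 * l ^ 2) := by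
    rw [hχγ, hζ]
    exact Complex.isPrimitiveRoot_exp _ hn
  have hd : ¬ (2 * l : ℤ) ∣ d - l := fun h ↦
    hdl (sub_eq_zero.1 (Int.eq_zero_of_abs_lt_dvd h (abs_lt.2 (by lia))))
  obtain ⟨X, rfl, hX⟩ := exists_mulChar_coe_eq_and_orderOf_eq hχ0 hχmul hγ hn hprim
  rw [← hcard]
  exact jacobiSum_dl_formula_general hl.two_le hX hd
end

section
/- Let n be an integer with 1 ≤ n ≤ l²−1 and gcd(l, n) = 1. Then there exist rational integers c_3, c_4, …, c_l (depending on n) such that J_{l²}(1,n) ≡ −1 + Σ_{i=3}^{l} c_i (ζ_{l²} − 1)^i (mod (1−ζ_{l²})^{l+1}). -/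
open Complex Finset

/-!
Put `π = ζ - 1`. Expanding `χ(x) ψ(1 - x)` around `1` gives
`J(χ, ψ) + 1 = ∑ χ + ∑ ψ - (q - 1) + ∑ (χ(x) - 1)(ψ(1 - x) - 1)`. Here `∑ χ`, `∑ ψ` and `q - 1` are
multiples of the order `N`, hence of `π³`. If `χ` and `ψ` send a generator to `ζ ^ i` and `ζ ^ j`
and `a` denotes the discrete logarithm, the last sum is `i j T π²` modulo `π³`, where
`T = ∑ a(x) a(1 - x)`. The substitution `x ↦ x⁻¹` gives `4 T ≡ 2 ∑ a(x)²` and the substitution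
`x ↦ g x` gives `6 ∑ a(x)² ≡ 0` modulo `N`. So `N ∣ 12 T`, and this forces `π ∣ T` once `N ∤ 12`.
-/

section RootsOfUnity

variable {A : Type*} [CommRing A]

theorem exists_pow_sub_one_eq_mul_add_sq_mul (μ : A) (k : ℕ) :
    ∃ y, μ ^ k - 1 = k * (μ - 1) + (μ - 1) ^ 2 * y := by
  induction k with
  | zero => exact ⟨0, by simp⟩
  | succ k ih =>
    obtain ⟨y, hy⟩ := ih
    exact ⟨y * μ + k, by push_cast; linear_combination μ * hy⟩

theorem sub_one_pow_three_dvd_pow_sub_one_mul_pow_sub_one_sub (μ : A) (a b : ℕ) :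
    (μ - 1) ^ 3 ∣ (μ ^ a - 1) * (μ ^ b - 1) - a * b * (μ - 1) ^ 2 := by
  obtain ⟨y, hy⟩ := exists_pow_sub_one_eq_mul_add_sq_mul μ a
  obtain ⟨z, hz⟩ := exists_pow_sub_one_eq_mul_add_sq_mul μ b
  exact ⟨a * z + b * y + (μ - 1) * y * z, by rw [hy, hz]; ring⟩

variable [IsDomain A]

-- The geometric sum of the `T` powers of `μ ^ c` vanishes, and each summand is `1` modulo `μ - 1`.
theorem sub_one_dvd_natCast_of_pow_mul_eq_one {μ : A} {c T : ℕ} (hc : μ ^ c ≠ 1)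
    (hcT : μ ^ (c * T) = 1) : μ - 1 ∣ (T : A) := by
  have geom_sum_eq_zero : ∑ i ∈ range T, (μ ^ c) ^ i = 0 := by
    have h := geom_sum_mul (μ ^ c) T
    rw [← pow_mul, hcT, sub_self] at h
    exact (mul_eq_zero.mp h).resolve_right (sub_ne_zero.mpr hc)
  have h : μ - 1 ∣ ∑ i ∈ range T, ((μ ^ c) ^ i - 1) :=
    dvd_sum fun i _ ↦ by rw [← pow_mul]; exact sub_one_dvd_pow_sub_one μ _
  simpa [sum_sub_distrib, geom_sum_eq_zero] using h

theorem sub_one_pow_dvd_natCast_order {μ : A} {N k : ℕ} (hμ : IsPrimitiveRoot μ N) (hk : k < N) :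
    (μ - 1) ^ k ∣ (N : A) := by
  obtain ⟨z, -, hz⟩ := hμ.self_sub_one_pow_dvd_order hk
  exact ⟨z, by rw [hz, mul_comm]⟩

end RootsOfUnity

section Logarithm

/-- A function on a field with values in a ring that turns products of nonzero elements into sums,
such as a discrete logarithm modulo `N`. Its value at `0` is the junk value `0`. -/
structure IsLogarithm {F S : Type*} [Field F] [CommRing S] (a : F → S) : Prop where
  map_zero : a 0 = 0
  map_mul : ∀ {x y : F}, x ≠ 0 → y ≠ 0 → a (x * y) = a x + a y

namespace IsLogarithm

variable {F S : Type*} [Field F] [CommRing S] {a : F → S}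

theorem map_one (ha : IsLogarithm a) : a 1 = 0 := by
  simpa using ha.map_mul (one_ne_zero (α := F)) one_ne_zero

theorem map_inv (ha : IsLogarithm a) (x : F) : a x⁻¹ = -a x := by
  rcases eq_or_ne x 0 with rfl | hx
  · simp [ha.map_zero]
  · have h := ha.map_mul hx (inv_ne_zero hx)
    rw [mul_inv_cancel₀ hx, ha.map_one] at h
    exact eq_neg_of_add_eq_zero_right h.symm

theorem two_mul_map_neg_one (ha : IsLogarithm a) : 2 * a (-1) = 0 := by
  have h := ha.map_mul (neg_ne_zero.mpr (one_ne_zero (α := F))) (neg_ne_zero.mpr one_ne_zero)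
  rw [neg_one_mul, neg_neg, ha.map_one] at h
  rw [two_mul, h]

theorem two_mul_map_inv_mul_map_one_sub_inv (ha : IsLogarithm a) (x : F) :
    2 * (a x⁻¹ * a (1 - x⁻¹)) = 2 * a x ^ 2 - 2 * (a x * a (1 - x)) := by
  rcases eq_or_ne x 0 with rfl | hx0
  · simp [ha.map_zero]
  rcases eq_or_ne x 1 with rfl | hx1
  · simp [ha.map_zero, ha.map_one]
  have hx1' : 1 - x ≠ 0 := sub_ne_zero.mpr hx1.symm
  have factor : 1 - x⁻¹ = -1 * ((1 - x) * x⁻¹) := by field_simp; ring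
  have map_factor : a (1 - x⁻¹) = a (-1) + (a (1 - x) - a x) := by
    rw [factor, ha.map_mul (neg_ne_zero.mpr one_ne_zero) (mul_ne_zero hx1' (inv_ne_zero hx0)),
      ha.map_mul hx1' (inv_ne_zero hx0), ha.map_inv, ← sub_eq_add_neg]
  rw [map_factor, ha.map_inv]
  linear_combination -a x * ha.two_mul_map_neg_one

variable [Fintype F]

theorem four_mul_sum_mul_map_one_sub (ha : IsLogarithm a) :
    4 * ∑ x, a x * a (1 - x) = 2 * ∑ x, a x ^ 2 := by
  have sum_inv : ∑ x, a x⁻¹ * a (1 - x⁻¹) = ∑ x, a x * a (1 - x) :=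
    Equiv.sum_comp (Equiv.inv F) fun x ↦ a x * a (1 - x)
  have h := Fintype.sum_congr _ _ ha.two_mul_map_inv_mul_map_one_sub_inv
  rw [sum_sub_distrib, ← mul_sum, ← mul_sum, ← mul_sum, sum_inv] at h
  linear_combination h

-- Substitute `x ↦ t * x`; the summand `1` on the right comes from `x = 0`.
theorem sum_add_one_pow (ha : IsLogarithm a) {t : F} (ht0 : t ≠ 0) (ht : a t = 1) {r : ℕ}
    (hr : r ≠ 0) : ∑ x, (a x + 1) ^ r = ∑ x, a x ^ r + 1 := by
  classical
  have map_mul_pow (x : F) : (a x + 1) ^ r = a (t * x) ^ r + if x = 0 then 1 else 0 := by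
    rcases eq_or_ne x 0 with rfl | hx
    · simp [ha.map_zero, hr]
    · simp [ha.map_mul ht0 hx, ht, hx, add_comm]
  rw [Fintype.sum_congr _ _ map_mul_pow, sum_add_distrib, sum_ite_eq' univ, if_pos (mem_univ _)]
  congr 1
  exact Equiv.sum_comp (Equiv.mulLeft₀ t ht0) fun x ↦ a x ^ r

theorem six_mul_sum_sq (ha : IsLogarithm a) {t : F} (ht0 : t ≠ 0) (ht : a t = 1)
    (hF : (Fintype.card F : S) = 1) : 6 * ∑ x, a x ^ 2 = 0 := by
  have two_mul_sum : 2 * ∑ x, a x = 0 := by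
    have h := ha.sum_add_one_pow ht0 ht two_ne_zero
    simp only [add_sq, mul_one, one_pow, sum_add_distrib, ← mul_sum, sum_const, card_univ,
      nsmul_eq_mul, hF] at h
    linear_combination h
  have three_mul_sum_sq_add : 3 * ∑ x, a x ^ 2 + 3 * ∑ x, a x = 0 := by
    have h := ha.sum_add_one_pow ht0 ht three_ne_zero
    have cube (y : S) : (y + 1) ^ 3 = y ^ 3 + 3 * y ^ 2 + 3 * y + 1 := by ring
    simp only [cube, sum_add_distrib, ← mul_sum, sum_const, card_univ, nsmul_eq_mul, mul_one,
      hF] at h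
    linear_combination h
  linear_combination 2 * three_mul_sum_sq_add - 3 * two_mul_sum

theorem twelve_mul_sum_mul_map_one_sub (ha : IsLogarithm a) {t : F} (ht0 : t ≠ 0) (ht : a t = 1)
    (hF : (Fintype.card F : S) = 1) : 12 * ∑ x, a x * a (1 - x) = 0 := by
  linear_combination 3 * ha.four_mul_sum_mul_map_one_sub + ha.six_mul_sum_sq ht0 ht hF

end IsLogarithm

variable (F : Type*) [Field F] [Fintype F]

theorem exists_generator_nat_logarithm :
    ∃ (g : F) (k : F → ℕ), g ≠ 0 ∧ k 0 = 0 ∧ (∀ x, x ≠ 0 → g ^ k x = x) ∧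
      ∀ N, N ∣ Fintype.card F - 1 →
        IsLogarithm (fun x ↦ (k x : ZMod N)) ∧ (k g : ZMod N) = 1 := by
  classical
  obtain ⟨g, hg⟩ := IsCyclic.exists_generator (α := Fˣ)
  have orderOf_g : orderOf g = Fintype.card F - 1 := by
    rw [orderOf_eq_card_of_forall_mem_zpowers hg, Nat.card_eq_fintype_card, Fintype.card_units]
  have exists_log (x : F) : ∃ k : ℕ, (x = 0 → k = 0) ∧ (x ≠ 0 → (g : F) ^ k = x) := by
    rcases eq_or_ne x 0 with rfl | hx
    · exact ⟨0, fun _ ↦ rfl, fun h ↦ absurd rfl h⟩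
    · obtain ⟨k, hk⟩ := mem_powers_iff_mem_zpowers.mpr (hg (Units.mk0 x hx))
      exact ⟨k, fun h ↦ absurd h hx, fun _ ↦ by simpa using congrArg Units.val hk⟩
  choose k hk0 hk using exists_log
  have cast_eq {N i j : ℕ} (hN : N ∣ Fintype.card F - 1) (h : (g : F) ^ i = (g : F) ^ j) :
      (i : ZMod N) = j := by
    rw [ZMod.natCast_eq_natCast_iff]
    have h' : g ^ i = g ^ j := Units.ext (by simpa using h)
    exact (orderOf_g ▸ pow_eq_pow_iff_modEq.mp h').of_dvd hN
  refine ⟨g, k, g.ne_zero, hk0 0 rfl, hk, fun N hN ↦ ⟨⟨by simp [hk0], fun {x y} hx hy ↦ ?_⟩, ?_⟩⟩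
  · rw [← Nat.cast_add]
    exact cast_eq hN (by rw [hk _ (mul_ne_zero hx hy), pow_add, hk x hx, hk y hy])
  · rw [← Nat.cast_one]
    exact cast_eq hN (by rw [hk _ g.ne_zero, pow_one])

end Logarithm

section JacobiSum

variable {F R : Type*} [Field F] [CommRing R] {N : ℕ} {μ : R} {χ ψ : MulChar F R}

theorem sub_one_pow_three_dvd_mulChar_sub_one_mul_sub {g : F} {k : F → ℕ} {i j : ℕ}
    (hk0 : k 0 = 0) (hk : ∀ x, x ≠ 0 → g ^ k x = x) (hχ : χ g = μ ^ i) (hψ : ψ g = μ ^ j) (x : F) :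
    (μ - 1) ^ 3 ∣
      (χ x - 1) * (ψ (1 - x) - 1) - i * j * (μ - 1) ^ 2 * ((k x * k (1 - x) : ℕ) : R) := by
  rcases eq_or_ne x 0 with rfl | hx0
  · simp [hk0]
  rcases eq_or_ne x 1 with rfl | hx1
  · simp [hk0]
  have apply_χ : χ x = μ ^ (i * k x) := by
    rw [pow_mul, ← hχ, ← map_pow, hk x hx0]
  have apply_ψ : ψ (1 - x) = μ ^ (j * k (1 - x)) := by
    rw [pow_mul, ← hψ, ← map_pow, hk (1 - x) (sub_ne_zero.mpr hx1.symm)]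
  rw [apply_χ, apply_ψ]
  convert sub_one_pow_three_dvd_pow_sub_one_mul_pow_sub_one_sub μ (i * k x) (j * k (1 - x)) using 2
  push_cast
  ring

theorem exists_mulChar_adjoin_ringHomComp_eq [Finite F] [IsDomain R] [NeZero N]
    (hμ : IsPrimitiveRoot μ N) (hχ : χ ^ N = 1) :
    ∃ χ' : MulChar F (Algebra.adjoin ℤ {μ}),
      χ'.ringHomComp (algebraMap (Algebra.adjoin ℤ {μ}) R) = χ := by
  have mem (x : F) : χ x ∈ Algebra.adjoin ℤ {μ} :=
    MulChar.apply_mem_algebraAdjoin_of_pow_eq_one hχ hμ x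
  refine ⟨⟨⟨⟨fun x ↦ ⟨χ x, mem x⟩, Subtype.ext χ.map_one⟩,
    fun x y ↦ Subtype.ext (map_mul χ x y)⟩, fun x hx ↦ Subtype.ext (χ.map_nonunit hx)⟩, ?_⟩
  ext x
  rfl

variable [Fintype F]

theorem jacobiSum_add_one_eq (χ ψ : MulChar F R) :
    jacobiSum χ ψ + 1 = ∑ x, χ x + ∑ x, ψ x - ((Fintype.card F - 1 : ℕ) : R) +
      ∑ x, (χ x - 1) * (ψ (1 - x) - 1) := by
  have sum_one_sub : ∑ x, ψ (1 - x) = ∑ x, ψ x := Equiv.sum_comp (Equiv.subLeft 1) ψ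
  have expand (x : F) : χ x * ψ (1 - x) =
      χ x + ψ (1 - x) - 1 + (χ x - 1) * (ψ (1 - x) - 1) := by ring
  rw [jacobiSum, Fintype.sum_congr _ _ expand, sum_add_distrib, sum_sub_distrib, sum_add_distrib,
    sum_one_sub, Nat.cast_sub Fintype.card_pos]
  simp only [sum_const, card_univ, nsmul_eq_mul, mul_one, Nat.cast_one]
  ring

variable [IsDomain R]

theorem natCast_card_sub_one_dvd_sum_mulChar (χ : MulChar F R) :
    ((Fintype.card F - 1 : ℕ) : R) ∣ ∑ x, χ x := by
  classical
  rcases eq_or_ne χ 1 with rfl | hχ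
  · rw [MulChar.sum_one_eq_card_units, Fintype.card_units]
  · simp [MulChar.sum_eq_zero_of_ne_one hχ]

theorem sub_one_dvd_sum_mul_one_sub {g : F} {k : F → ℕ} (hN : ¬ N ∣ 12)
    (hμ : IsPrimitiveRoot μ N) (hNF : N ∣ Fintype.card F - 1) (hg0 : g ≠ 0)
    (hk : IsLogarithm fun x ↦ (k x : ZMod N)) (hkg : (k g : ZMod N) = 1) :
    μ - 1 ∣ ((∑ x, k x * k (1 - x) : ℕ) : R) := by
  have hF : (Fintype.card F : ZMod N) = 1 := by
    have h := (ZMod.natCast_eq_zero_iff _ _).mpr hNF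
    rwa [Nat.cast_sub Fintype.card_pos, Nat.cast_one, sub_eq_zero] at h
  have order_dvd : N ∣ 12 * ∑ x, k x * k (1 - x) := by
    rw [← ZMod.natCast_eq_zero_iff]
    simpa using hk.twelve_mul_sum_mul_map_one_sub hg0 hkg hF
  exact sub_one_dvd_natCast_of_pow_mul_eq_one (mt (hμ.pow_eq_one_iff_dvd 12).mp hN)
    ((hμ.pow_eq_one_iff_dvd _).mpr order_dvd)

theorem sub_one_pow_three_dvd_sum_mulChar_sub_one_mul (hN : ¬ N ∣ 12)
    (hμ : IsPrimitiveRoot μ N) (hNF : N ∣ Fintype.card F - 1) (hχ : χ ^ N = 1) (hψ : ψ ^ N = 1) :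
    (μ - 1) ^ 3 ∣ ∑ x, (χ x - 1) * (ψ (1 - x) - 1) := by
  have : NeZero N := ⟨ne_zero_of_dvd_ne_zero (Nat.sub_ne_zero_of_lt Fintype.one_lt_card) hNF⟩
  obtain ⟨g, k, hg0, hk0, hk, hlog⟩ := exists_generator_nat_logarithm F
  obtain ⟨log, log_g⟩ := hlog N hNF
  obtain ⟨i, -, hi⟩ := MulChar.exists_apply_eq_pow hχ hμ hg0
  obtain ⟨j, -, hj⟩ := MulChar.exists_apply_eq_pow hψ hμ hg0
  have sum_sub := dvd_sum fun x (_ : x ∈ univ) ↦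
    sub_one_pow_three_dvd_mulChar_sub_one_mul_sub hk0 hk hi hj x
  rw [sum_sub_distrib, ← mul_sum, ← Nat.cast_sum] at sum_sub
  have leading : (μ - 1) ^ 3 ∣ i * j * (μ - 1) ^ 2 * ((∑ x, k x * k (1 - x) : ℕ) : R) := by
    rw [pow_succ, mul_assoc]
    exact (mul_dvd_mul_left _ (sub_one_dvd_sum_mul_one_sub hN hμ hNF hg0 log log_g)).mul_left _
  exact (dvd_sub_left leading).mp sum_sub

theorem sub_one_pow_three_dvd_jacobiSum_add_one (hN : ¬ N ∣ 12)
    (hμ : IsPrimitiveRoot μ N) (hNF : N ∣ Fintype.card F - 1) (hχ : χ ^ N = 1) (hψ : ψ ^ N = 1) :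
    (μ - 1) ^ 3 ∣ jacobiSum χ ψ + 1 := by
  have three_lt : 3 < N := by
    have := Fintype.one_lt_card (α := F)
    by_contra!
    interval_cases N <;> omega
  have dvd_card : (μ - 1) ^ 3 ∣ ((Fintype.card F - 1 : ℕ) : R) :=
    (sub_one_pow_dvd_natCast_order hμ three_lt).trans (Nat.cast_dvd_cast hNF)
  rw [jacobiSum_add_one_eq]
  exact dvd_add (dvd_sub (dvd_add (dvd_card.trans (natCast_card_sub_one_dvd_sum_mulChar χ))
      (dvd_card.trans (natCast_card_sub_one_dvd_sum_mulChar ψ))) dvd_card)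
    (sub_one_pow_three_dvd_sum_mulChar_sub_one_mul hN hμ hNF hχ hψ)

theorem exists_jacobiSum_eq_neg_one_add_sub_one_pow_three_mul (hN : ¬ N ∣ 12)
    (hμ : IsPrimitiveRoot μ N) (hNF : N ∣ Fintype.card F - 1) (hχ : χ ^ N = 1) (hψ : ψ ^ N = 1) :
    ∃ z ∈ Algebra.adjoin ℤ {μ}, jacobiSum χ ψ = -1 + (μ - 1) ^ 3 * z := by
  have : NeZero N := ⟨ne_zero_of_dvd_ne_zero (Nat.sub_ne_zero_of_lt Fintype.one_lt_card) hNF⟩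
  obtain ⟨χ, rfl⟩ := exists_mulChar_adjoin_ringHomComp_eq hμ hχ
  obtain ⟨ψ, rfl⟩ := exists_mulChar_adjoin_ringHomComp_eq hμ hψ
  have val_injective : Function.Injective (algebraMap (Algebra.adjoin ℤ {μ}) R) :=
    Subtype.val_injective
  rw [MulChar.ringHomComp_pow, MulChar.ringHomComp_eq_one_iff val_injective] at hχ hψ
  let ν : Algebra.adjoin ℤ {μ} := ⟨μ, Algebra.self_mem_adjoin_singleton ℤ μ⟩
  have hν : IsPrimitiveRoot ν N := .of_map_of_injective (f := algebraMap _ R) hμ val_injective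
  obtain ⟨z, hz⟩ := sub_one_pow_three_dvd_jacobiSum_add_one hN hν hNF hχ hψ
  refine ⟨z, z.2, ?_⟩
  rw [jacobiSum_ringHomComp, eq_sub_of_add_eq hz]
  simp [ν, neg_add_eq_sub]

end JacobiSum

section Expansion

open Polynomial in
theorem exists_sub_one_adic_expansion {R A : Type*} [CommRing R] [CommRing A] [Algebra R A]
    {x y : A} (hy : y ∈ Algebra.adjoin R {x}) (m : ℕ) :
    ∃ c : ℕ → R, ∃ z ∈ Algebra.adjoin R {x - 1},
      y = ∑ i ∈ range m, algebraMap R A (c i) * (x - 1) ^ i + (x - 1) ^ m * z := by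
  obtain ⟨p, rfl⟩ := Algebra.adjoin_mem_exists_aeval R x hy
  let P := p.comp (X + 1)
  have trunc_dvd : X ^ m ∣ P - ∑ i ∈ range m, C (P.coeff i) * X ^ i := by
    refine X_pow_dvd_iff.mpr fun d hd ↦ ?_
    simp [hd]
  obtain ⟨Q, hQ⟩ := trunc_dvd
  refine ⟨P.coeff, aeval (x - 1) Q, aeval_mem_adjoin_singleton R (x - 1), ?_⟩
  have h := congrArg (aeval (x - 1)) (sub_eq_iff_eq_add'.mp hQ)
  simpa [P, aeval_comp] using h

theorem exists_isIntegral_neg_one_add_sub_div {K : Type*} [Field K] {ζ y : K}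
    (hζ : IsIntegral ℤ ζ) (hζ1 : ζ ≠ 1) (hy : y ∈ Algebra.adjoin ℤ {ζ}) {m : ℕ} (hm : 2 ≤ m) :
    ∃ c : ℕ → ℤ,
      IsIntegral ℤ ((-1 + (ζ - 1) ^ 3 * y - (-1 + ∑ t ∈ Icc 3 m, (c t : K) * (ζ - 1) ^ t)) /
        (1 - ζ) ^ (m + 1)) := by
  obtain ⟨c, z, hz, expansion⟩ := exists_sub_one_adic_expansion hy (m - 2)
  have integral_z : IsIntegral ℤ z :=
    Algebra.adjoin_le (S := integralClosure ℤ K)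
      (Set.singleton_subset_iff.mpr (hζ.sub isIntegral_one)) hz
  have sum_shift : ∑ t ∈ Icc 3 m, (c (t - 3) : K) * (ζ - 1) ^ t =
      (ζ - 1) ^ 3 * ∑ i ∈ range (m - 2), (c i : K) * (ζ - 1) ^ i := by
    rw [mul_sum, ← Ico_add_one_right_eq_Icc, sum_Ico_eq_sum_range]
    refine sum_congr rfl fun i _ ↦ ?_
    rw [Nat.add_sub_cancel_left, pow_add, mul_left_comm]
  have pow_split : (ζ - 1) ^ 3 * (ζ - 1) ^ (m - 2) = (-1) ^ (m + 1) * (1 - ζ) ^ (m + 1) := by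
    rw [← pow_add, ← mul_pow, neg_one_mul, neg_sub]
    congr 1
    omega
  refine ⟨fun t ↦ c (t - 3), ?_⟩
  have quotient_eq :
      (-1 + (ζ - 1) ^ 3 * y - (-1 + ∑ t ∈ Icc 3 m, (c (t - 3) : K) * (ζ - 1) ^ t)) /
        (1 - ζ) ^ (m + 1) = (-1) ^ (m + 1) * z := by
    rw [div_eq_iff (pow_ne_zero _ (sub_ne_zero.mpr hζ1.symm)), sum_shift, expansion]
    simp only [algebraMap_int_eq, eq_intCast]
    linear_combination z * pow_split
  rw [quotient_eq]
  exact (isIntegral_one.neg.pow (m + 1)).mul integral_z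

end Expansion

section OfGenerator

variable {F R : Type*} [Field F] [CommRing R]

theorem exists_mulChar_coe_eq_s16 [IsDomain R] {χ : F → R} (h0 : χ 0 = 0)
    (hmul : ∀ x y, χ (x * y) = χ x * χ y) {γ : F} (hγ : χ γ ≠ 0) :
    ∃ χ' : MulChar F R, ⇑χ' = χ := by
  have map_one : χ 1 = 1 := by
    simpa [hγ] using hmul γ 1
  exact ⟨⟨⟨⟨χ, map_one⟩, hmul⟩, fun x hx ↦ by
    rw [isUnit_iff_ne_zero, not_not] at hx
    exact hx ▸ h0⟩, rfl⟩

variable {χ : MulChar F R} {γ : F} {N : ℕ}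

theorem mulChar_pow_eq_one_of_generator (hγ : ∀ x, x ≠ 0 → ∃ k : ℕ, γ ^ k = x)
    (hχ : χ γ ^ N = 1) : χ ^ N = 1 := by
  ext u
  obtain ⟨k, hk⟩ := hγ u u.ne_zero
  rw [MulChar.pow_apply_coe, MulChar.one_apply_coe, ← hk, map_pow, ← pow_mul, mul_comm, pow_mul, hχ,
    one_pow]

theorem dvd_card_sub_one_of_mulChar_apply [Fintype F] (hγ : γ ≠ 0) (hχ : IsPrimitiveRoot (χ γ) N) :
    N ∣ Fintype.card F - 1 :=
  hχ.dvd_of_pow_eq_one _ (by rw [← map_pow, FiniteField.pow_card_sub_one_eq_one γ hγ, map_one])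

end OfGenerator

section Main

variable {F : Type*} [Field F] [DecidableEq F]

theorem charPow_mulChar (χ : MulChar F ℂ) (i : ℤ) (v : F) : charPow χ i v = (χ ^ i) v := by
  rcases eq_or_ne v 0 with rfl | hv
  · simp [charPow, MulChar.map_zero]
  · lift v to Fˣ using hv.isUnit
    rw [charPow, if_neg v.ne_zero, MulChar.zpow_apply_coe, ← MulChar.coe_toUnitHom,
      ← MulChar.coe_toUnitHom, map_zpow, Units.val_zpow_eq_zpow_val]

variable [Fintype F]

theorem jSum_mulChar {χ : MulChar F ℂ} (hχ : χ (-1) = 1) (i j : ℤ) :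
    jSum χ i j = jacobiSum (χ ^ i) (χ ^ j) := by
  have map_neg (v : F) : charPow χ i (-v) = charPow χ i v := by
    simp only [charPow, neg_eq_zero]
    rw [← neg_one_mul, map_mul, hχ, one_mul]
  rw [jSum, ← Equiv.sum_comp (Equiv.neg F)]
  refine Fintype.sum_congr _ _ fun v ↦ ?_
  rw [Equiv.neg_apply, map_neg, neg_add_eq_sub, charPow_mulChar, charPow_mulChar]

theorem jacobiSum_lsq_coprime_general {N : ℕ} (hodd : Odd N) (hN : 3 < N) {ζ : ℂ}
    (hζ : IsPrimitiveRoot ζ N) {γ : F} (hγ : ∀ x, x ≠ 0 → ∃ k : ℕ, γ ^ k = x) {χ : F → ℂ}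
    (hχ0 : χ 0 = 0) (hχγ : χ γ = ζ) (hχmul : ∀ x y, χ (x * y) = χ x * χ y) (i j : ℤ) {m : ℕ}
    (hm : 2 ≤ m) :
    ∃ c : ℕ → ℤ,
      IsIntegral ℤ ((jSum χ i j - (-1 + ∑ t ∈ Icc 3 m, (c t : ℂ) * (ζ - 1) ^ t)) /
        (1 - ζ) ^ (m + 1)) := by
  have hζ0 : ζ ≠ 0 := hζ.ne_zero (by omega)
  have hN12 : ¬ N ∣ 12 := fun h ↦ by
    have := Nat.le_of_dvd (by norm_num) h
    interval_cases N <;> revert hodd h <;> decide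
  obtain ⟨χ, rfl⟩ := exists_mulChar_coe_eq_s16 hχ0 hχmul (hχγ ▸ hζ0)
  have hχN : χ ^ N = 1 := mulChar_pow_eq_one_of_generator hγ (hχγ ▸ hζ.pow_eq_one)
  have hγ0 : γ ≠ 0 := by
    rintro rfl
    exact hζ0 (hχγ ▸ hχ0)
  have hNF : N ∣ Fintype.card F - 1 := dvd_card_sub_one_of_mulChar_apply hγ0 (hχγ ▸ hζ)
  have hpow (k : ℤ) : (χ ^ k) ^ N = 1 := by
    rw [← zpow_natCast, zpow_comm, zpow_natCast, hχN, one_zpow]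
  obtain ⟨y, hy, hJ⟩ := exists_jacobiSum_eq_neg_one_add_sub_one_pow_three_mul hN12 hζ hNF
    (hpow i) (hpow j)
  rw [jSum_mulChar (χ.val_neg_one_eq_one_of_odd_order hodd hχN), hJ]
  exact exists_isIntegral_neg_one_add_sub_div (hζ.isIntegral (by omega))
    (hζ.ne_one (by omega)) hy hm

end Main

theorem jacobiSum_lsq_coprime {F : Type*} [Field F] [Fintype F] [DecidableEq F]
    (l p r q : ℕ) (hl : l.Prime) (hl3 : 3 ≤ l) (hp : p.Prime) (hr : 0 < r)
    (hq : q = p ^ r) (hql : q % l ^ 2 = 1) (hcard : Fintype.card F = q)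
    (γ : F) (hγ : ∀ x : F, x ≠ 0 → ∃ k : ℕ, γ ^ k = x)
    (ζ : ℂ) (hζ : ζ = Complex.exp (2 * Real.pi * Complex.I / ((l ^ 2 : ℕ) : ℂ)))
    (χ : F → ℂ) (hχ0 : χ 0 = 0) (hχγ : χ γ = ζ)
    (hχmul : ∀ x y : F, χ (x * y) = χ x * χ y)
    (n : ℤ) (hn1 : 1 ≤ n) (hn2 : n ≤ (l : ℤ) ^ 2 - 1) (hln : IsCoprime (l : ℤ) n) :
    ∃ c : ℕ → ℤ,
      IsIntegral ℤ ((jSum χ 1 n - (-1 + ∑ i ∈ Finset.Icc 3 l, (c i : ℂ) * (ζ - 1) ^ i)) /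
        (1 - ζ) ^ (l + 1)) :=
  jacobiSum_lsq_coprime_general (hl.odd_of_ne_two (by omega)).pow (by nlinarith)
    (hζ ▸ Complex.isPrimitiveRoot_exp _ (pow_ne_zero 2 hl.ne_zero)) hγ hχ0 hχγ hχmul 1 n (by omega)
end

section
/- Let n be an odd integer with 1 ≤ n < 2l²−1 and gcd(n, 2l²) = 1, and let w be an integer with γ^w = 2 in F_q (w = ind_γ 2). Then there exist rational integers a_3, …, a_l, b_3, …, b_l, and c_3, …, c_l such that J_{2l²}(1,n) ≡ ζ_{l²}^{−w(n+1)}·(−1 + Σ_{i=3}^{l} a_i (ζ_{l²} − 1)^i)·(−1 + Σ_{i=3}^{l} b_i (ζ_{l²}^n − 1)^i)·(−1 + Σ_{i=3}^{l} c_i (ζ_{l²}^{(1−l²)/2} − 1)^i) (mod (1−ζ_{l²})^{l+1}). -/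
open Complex Finset

/-!
Write `χ = ρ ψ` with `ρ` the quadratic character and `ψ x = ζl ^ I x`, where `I` is an index with
values in `ℤ / l²`. Since `χ 4 = ζl ^ w`, the substitution `u = 4 v` gives
`ζl ^ (w (n + 1)) J(1, n) = ∑ u, ρ (u (u + 4)) ζl ^ (I u + n I (u + 4))`.

Expand `ζl ^ k` to second order in `ζl - 1`, noting that `(ζl - 1) ^ 3` divides `l`. The total mass
of the weight `ρ (u (u + 4))` is `-1`. The symmetry `u ↦ -4 - u`, the substitution
`t = u / (u + 4)`, and completing the square in `u (u + 4)` determine enough moments of `I u` and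
`I (u + 4)` to show that the first moment of `I u + n I (u + 4)` and three times its second moment
vanish modulo `l²`. Hence the sum is `≡ -1` modulo `(ζl - 1) ^ 3` in `ℤ[ζl]`, and writing the
cofactor as a polynomial in `ζl - 1` gives a congruence whose only nontrivial factor is the first.
-/

lemma four_ne_zero_of_ringChar_ne_two {F : Type*} [Field F] (hF : ringChar F ≠ 2) :
    (4 : F) ≠ 0 := by
  have h2 := Ring.two_ne_zero hF
  simpa only [show (4 : F) = 2 * 2 by norm_num] using mul_ne_zero h2 h2

section QuadraticCharSums

variable {F R : Type*} [Field F] [Fintype F] [DecidableEq F] [CommRing R]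

lemma ne_zero_of_quadraticChar_eq_neg_one {g : F} (hg : quadraticChar F g = -1) : g ≠ 0 := by
  rintro rfl
  simp at hg

lemma ringChar_ne_two_of_quadraticChar_eq_neg_one {g : F} (hg : quadraticChar F g = -1) :
    ringChar F ≠ 2 := by
  intro h2
  have hg0 := ne_zero_of_quadraticChar_eq_neg_one hg
  rw [quadraticChar_eq_one_of_char_two h2 hg0] at hg
  norm_num at hg

lemma quadraticChar_eq_neg_one_of_forall_exists_pow (hF : ringChar F ≠ 2) {γ : F}
    (hγ : ∀ x : F, x ≠ 0 → ∃ k : ℕ, γ ^ k = x) : quadraticChar F γ = -1 := by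
  obtain ⟨x, hx⟩ := quadraticChar_exists_neg_one' hF
  obtain ⟨k, hk⟩ := hγ x x.ne_zero
  rw [quadraticChar_neg_one_iff_not_isSquare] at hx ⊢
  exact fun hsq => hx (hk ▸ hsq.pow k)

lemma sum_comp_sq (hF : ringChar F ≠ 2) (f : F → R) :
    ∑ x, f (x ^ 2) = ∑ a, ((quadraticChar F a : R) + 1) * f a := by
  rw [← sum_fiberwise univ (fun x : F => x ^ 2)]
  refine sum_congr rfl fun a _ => ?_
  have hconst : ∀ x ∈ ({x | x ^ 2 = a} : Finset F), f (x ^ 2) = f a := fun x hx => by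
    rw [(mem_filter.1 hx).2]
  have hcard : ((#{x : F | x ^ 2 = a} : ℤ) : R) = (quadraticChar F a + 1 : ℤ) := by
    rw [← quadraticChar_card_sqrts hF a, Set.toFinset_ofPred]
  rw [sum_congr rfl hconst, sum_const, nsmul_eq_mul]
  congr 1
  exact_mod_cast hcard

variable {g : F} {f : F → R}

lemma sum_quadraticChar_mul_eq_zero (h2 : 2 ∈ nonZeroDivisors R)
    (hg : quadraticChar F g = -1) (hf : ∀ u, f (g * u) = f u) :
    ∑ u, (quadraticChar F u : R) * f u = 0 := by
  have hg0 := ne_zero_of_quadraticChar_eq_neg_one hg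
  have hneg : ∑ u, (quadraticChar F u : R) * f u = -∑ u, (quadraticChar F u : R) * f u :=
    calc ∑ u, (quadraticChar F u : R) * f u
        = ∑ u, (quadraticChar F (g * u) : R) * f (g * u) :=
          (Equiv.sum_comp (Equiv.mulLeft₀ g hg0) fun u => (quadraticChar F u : R) * f u).symm
      _ = -∑ u, (quadraticChar F u : R) * f u := by
          simp only [map_mul, hg, hf, neg_mul, one_mul, Int.cast_neg, sum_neg_distrib]
  rw [← mul_right_mem_nonZeroDivisors_eq_zero_iff h2]
  linear_combination hneg

lemma sum_quadraticChar_mul_add_mul_comp_div (h2 : 2 ∈ nonZeroDivisors R)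
    (hg : quadraticChar F g = -1) (hf : ∀ u, f (g * u) = f u) {c : F} (hc : c ≠ 0) :
    ∑ u, (quadraticChar F (u * (u + c)) : R) * f (u / (u + c)) = -f 1 := by
  -- The bijection `u ↦ 1 - c / (u + c)` agrees with `u ↦ u / (u + c)` except at `u = -c`,
  -- which it sends to the value `1` missed by the latter.
  let e : F ≃ F := (Equiv.addRight c).trans ((Equiv.inv F).trans
    ((Equiv.mulLeft₀ c hc).trans (Equiv.subLeft 1)))
  have he (u : F) : (quadraticChar F (e u) : R) * f (e u) =
      (quadraticChar F (u * (u + c)) : R) * f (u / (u + c)) + if u = -c then f 1 else 0 := by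
    have heu : e u = 1 - c * (u + c)⁻¹ := rfl
    rcases eq_or_ne u (-c) with rfl | hu
    · simp [heu]
    · have huc : u + c ≠ 0 := fun h => hu (eq_neg_of_add_eq_zero_left h)
      have hdiv : e u = u / (u + c) := by rw [heu]; field_simp; ring
      have hmul : u * (u + c) = u / (u + c) * (u + c) ^ 2 := by field_simp
      rw [hdiv, hmul, map_mul, quadraticChar_sq_one' huc, if_neg hu, mul_one, add_zero]
  have hsum := e.sum_comp fun t => (quadraticChar F t : R) * f t
  rw [sum_quadraticChar_mul_eq_zero h2 hg hf] at hsum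
  simp only [he, sum_add_distrib, sum_ite_eq', mem_univ, if_true] at hsum
  exact eq_neg_of_add_eq_zero_left hsum

-- Complete the square in `u * (u + 4) = (u + 2) ^ 2 - 4`, then count square roots.
lemma sum_quadraticChar_mul_add_four_mul_comp (h2 : 2 ∈ nonZeroDivisors R)
    (hg : quadraticChar F g = -1) (hf : ∀ u, f (g * u) = f u) :
    ∑ u, (quadraticChar F (u * (u + 4)) : R) * f (u * (u + 4)) =
      ∑ u, (quadraticChar F (u * (u + 4)) : R) * f u := by
  have hF := ringChar_ne_two_of_quadraticChar_eq_neg_one hg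
  let φ : F → R := fun u => (quadraticChar F u : R) * f u
  calc ∑ u, φ (u * (u + 4))
      = ∑ u, φ ((u + 2) ^ 2 - 4) := by congr! 2; ring
    _ = ∑ x, φ (x ^ 2 - 4) := Equiv.sum_comp (Equiv.addRight (2 : F)) fun x => φ (x ^ 2 - 4)
    _ = ∑ a, ((quadraticChar F a : R) + 1) * φ (a - 4) := sum_comp_sq hF fun a => φ (a - 4)
    _ = ∑ t, ((quadraticChar F (t + 4) : R) + 1) * φ t := by
        rw [← Equiv.sum_comp (Equiv.addRight (4 : F))]
        simp only [Equiv.coe_addRight, add_sub_cancel_right]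
    _ = ∑ t, (quadraticChar F (t * (t + 4)) : R) * f t + ∑ t, φ t := by
        rw [← sum_add_distrib]
        refine sum_congr rfl fun t _ => ?_
        simp only [φ, map_mul, Int.cast_mul]
        ring
    _ = ∑ t, (quadraticChar F (t * (t + 4)) : R) * f t := by
        rw [sum_quadraticChar_mul_eq_zero h2 hg hf, add_zero]

lemma sum_quadraticChar_mul_add {c : F} (hF : ringChar F ≠ 2) (hc : c ≠ 0) :
    ∑ u, quadraticChar F (u * (u + c)) = -1 := by
  obtain ⟨g, hg⟩ := quadraticChar_exists_neg_one hF
  simpa using sum_quadraticChar_mul_add_mul_comp_div (f := fun _ : F => (1 : ℤ))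
    (mem_nonZeroDivisors_of_ne_zero two_ne_zero) hg (fun _ => rfl) hc

end QuadraticCharSums

section WeightedMoments

variable {ι R : Type*} [Fintype ι] [CommSemiring R]

lemma sum_mul_linear (s x y : ι → R) (n : R) :
    ∑ i, s i * (x i + n * y i) = ∑ i, s i * x i + n * ∑ i, s i * y i := by
  simp only [mul_sum, ← sum_add_distrib]
  exact sum_congr rfl fun i _ => by ring

lemma sum_mul_linear_sq (s x y : ι → R) (n : R) :
    ∑ i, s i * (x i + n * y i) ^ 2 =
      ∑ i, s i * x i ^ 2 + 2 * n * ∑ i, s i * (x i * y i) + n ^ 2 * ∑ i, s i * y i ^ 2 := by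
  simp only [mul_sum, ← sum_add_distrib]
  exact sum_congr rfl fun i _ => by ring

end WeightedMoments

/-- `I` is an index (discrete logarithm) on `F`: it turns products of nonzero elements into sums.
Nothing is required of the value `I 0`. -/
def IsIndex {F A : Type*} [Mul F] [Zero F] [Add A] (I : F → A) : Prop :=
  ∀ ⦃x y : F⦄, x ≠ 0 → y ≠ 0 → I (x * y) = I x + I y

namespace IsIndex

section AddCommGroup

variable {F A : Type*} [GroupWithZero F] [AddCommGroup A] {I : F → A}

lemma map_one (hI : IsIndex I) : I 1 = 0 := by
  simpa using hI one_ne_zero one_ne_zero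

lemma map_pow (hI : IsIndex I) {x : F} (hx : x ≠ 0) (k : ℕ) : I (x ^ k) = k • I x := by
  induction k with
  | zero => simp [hI.map_one]
  | succ k ih => rw [pow_succ, hI (pow_ne_zero k hx) hx, ih, succ_nsmul]

lemma map_div (hI : IsIndex I) {x y : F} (hx : x ≠ 0) (hy : y ≠ 0) : I (x / y) = I x - I y := by
  rw [eq_sub_iff_add_eq, ← hI (div_ne_zero hx hy) hy, div_mul_cancel₀ x hy]

lemma map_mul_left_of_map_eq_zero (hI : IsIndex I) {g : F} (hg : g ≠ 0) (hIg : I g = 0) (u : F) :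
    I (g * u) = I u := by
  rcases eq_or_ne u 0 with rfl | hu
  · rw [mul_zero]
  · rw [hI hg hu, hIg, zero_add]

end AddCommGroup

variable {F R : Type*} [Field F] [CommRing R] {I : F → R}

lemma map_neg (hI : IsIndex I) (h2 : 2 ∈ nonZeroDivisors R) (x : F) : I (-x) = I x := by
  have hneg_one : I (-1) = 0 := by
    rw [← mul_right_mem_nonZeroDivisors_eq_zero_iff h2, mul_two,
      ← hI (neg_ne_zero.2 one_ne_zero) (neg_ne_zero.2 one_ne_zero), neg_mul_neg, one_mul,
      hI.map_one]
  rw [← neg_one_mul, hI.map_mul_left_of_map_eq_zero (neg_ne_zero.2 one_ne_zero) hneg_one]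

variable [Fintype F] [DecidableEq F] {g : F}

lemma sum_quadraticChar_mul_comp_sub (hI : IsIndex I) (h2 : 2 ∈ nonZeroDivisors R)
    (hg : quadraticChar F g = -1) (hIg : I g = 0) {c : F} (hc : c ≠ 0) (h : R → R) :
    ∑ u, (quadraticChar F (u * (u + c)) : R) * h (I u - I (u + c)) = -h 0 := by
  have hg0 := ne_zero_of_quadraticChar_eq_neg_one hg
  have hdiv := sum_quadraticChar_mul_add_mul_comp_div (f := fun u => h (I u)) h2 hg
    (fun u => congrArg h (hI.map_mul_left_of_map_eq_zero hg0 hIg u)) hc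
  rw [← hI.map_one, ← hdiv]
  refine sum_congr rfl fun u _ => ?_
  rcases eq_or_ne u 0 with rfl | hu
  · simp
  rcases eq_or_ne (u + c) 0 with huc | huc
  · simp [huc]
  · rw [hI.map_div hu huc]

lemma sum_quadraticChar_mul_comp_add (hI : IsIndex I) (h2 : 2 ∈ nonZeroDivisors R)
    (hg : quadraticChar F g = -1) (hIg : I g = 0) (h : R → R) :
    ∑ u, (quadraticChar F (u * (u + 4)) : R) * h (I u + I (u + 4)) =
      ∑ u, (quadraticChar F (u * (u + 4)) : R) * h (I u) := by
  have hg0 := ne_zero_of_quadraticChar_eq_neg_one hg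
  rw [← sum_quadraticChar_mul_add_four_mul_comp (f := fun u => h (I u)) h2 hg
    fun u => congrArg h (hI.map_mul_left_of_map_eq_zero hg0 hIg u)]
  refine sum_congr rfl fun u _ => ?_
  rcases eq_or_ne u 0 with rfl | hu
  · simp
  rcases eq_or_ne (u + 4) 0 with hu4 | hu4
  · simp [hu4]
  · rw [hI hu hu4]

lemma sum_quadraticChar_mul_comp_shift (hI : IsIndex I) (h2 : 2 ∈ nonZeroDivisors R) (c : F)
    (h : R → R) :
    ∑ u, (quadraticChar F (u * (u + c)) : R) * h (I (u + c)) =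
      ∑ u, (quadraticChar F (u * (u + c)) : R) * h (I u) := by
  rw [← (Equiv.subLeft (-c)).sum_comp]
  refine sum_congr rfl fun u _ => ?_
  have hprod : (-c - u) * (-c - u + c) = u * (u + c) := by ring
  have hshift : -c - u + c = -u := by ring
  rw [Equiv.subLeft_apply, hprod, hshift, hI.map_neg h2]

lemma sum_quadraticChar_mul (hI : IsIndex I) (h2 : 2 ∈ nonZeroDivisors R)
    (hg : quadraticChar F g = -1) (hIg : I g = 0) :
    ∑ u, (quadraticChar F (u * (u + 4)) : R) * I u = 0 := by
  have hadd := hI.sum_quadraticChar_mul_comp_add h2 hg hIg fun x => x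
  have hshift := hI.sum_quadraticChar_mul_comp_shift h2 4 fun x => x
  have hsplit := sum_mul_linear (fun u => (quadraticChar F (u * (u + 4)) : R)) I
    (fun u => I (u + 4)) 1
  simp only [one_mul] at hsplit
  linear_combination hadd - hshift - hsplit

lemma sum_quadraticChar_mul_linear (hI : IsIndex I) (h2 : 2 ∈ nonZeroDivisors R)
    (hg : quadraticChar F g = -1) (hIg : I g = 0) (n : R) :
    ∑ u, (quadraticChar F (u * (u + 4)) : R) * (I u + n * I (u + 4)) = 0 := by
  rw [sum_mul_linear, hI.sum_quadraticChar_mul_comp_shift h2 4 fun x => x,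
    hI.sum_quadraticChar_mul h2 hg hIg, mul_zero, add_zero]

-- With `C = ∑ s u * (I u) ^ 2` and `D = ∑ s u * (I u * I (u + 4))`, where
-- `s u = quadraticChar F (u * (u + 4))`, taking `h x = x ^ 2` in the identities above gives
-- `2 * C - 2 * D = 0` and `2 * C + 2 * D = C`.
lemma three_mul_sum_quadraticChar_mul_linear_sq (hI : IsIndex I) (h2 : 2 ∈ nonZeroDivisors R)
    (hg : quadraticChar F g = -1) (hIg : I g = 0) (n : R) :
    3 * ∑ u, (quadraticChar F (u * (u + 4)) : R) * (I u + n * I (u + 4)) ^ 2 = 0 := by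
  have h4 : (4 : F) ≠ 0 :=
    four_ne_zero_of_ringChar_ne_two (ringChar_ne_two_of_quadraticChar_eq_neg_one hg)
  have hexpand (m : R) := sum_mul_linear_sq (fun u => (quadraticChar F (u * (u + 4)) : R)) I
    (fun u => I (u + 4)) m
  have hshift := hI.sum_quadraticChar_mul_comp_shift h2 4 fun x => x ^ 2
  have hsub := hI.sum_quadraticChar_mul_comp_sub h2 hg hIg h4 fun x => x ^ 2
  have hadd := hI.sum_quadraticChar_mul_comp_add h2 hg hIg fun x => x ^ 2
  have hexpand_sub := hexpand (-1)
  have hexpand_add := hexpand 1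
  simp only [neg_one_mul, one_mul, ← sub_eq_add_neg] at hexpand_sub hexpand_add
  rw [hexpand n]
  linear_combination (1 - n + n ^ 2) * (hsub - hexpand_sub) +
    (1 + n) ^ 2 * (hadd - hexpand_add) + (n - 2) * (n + 1) * hshift

end IsIndex

section SubOnePowDvd

variable {R : Type*} [CommRing R]

lemma sub_one_pow_three_dvd_two_mul_pow_sub (z : R) (k : ℕ) :
    (z - 1) ^ 3 ∣ 2 * z ^ k - (2 + 2 * k * (z - 1) + ((k : R) ^ 2 - k) * (z - 1) ^ 2) := by
  induction k with
  | zero => simp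
  | succ k ih =>
    obtain ⟨c, hc⟩ := ih
    refine ⟨z * c + (k ^ 2 - k), ?_⟩
    push_cast
    linear_combination z * hc

lemma sub_one_pow_three_dvd_sum_mul_pow_sub_one {ι : Type*} [Fintype ι] {l : ℕ} (hl : Odd l)
    {z : R} (hz : (z - 1) ^ 3 ∣ (l : R)) (s : ι → ℤ) (k : ι → ℕ)
    (h1 : (l : ℤ) ∣ ∑ i, s i * k i) (h2 : (l : ℤ) ∣ ∑ i, s i * (k i : ℤ) ^ 2) :
    (z - 1) ^ 3 ∣ ∑ i, (s i : R) * (z ^ k i - 1) := by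
  have hcast {x : ℤ} (hx : (l : ℤ) ∣ x) : (z - 1) ^ 3 ∣ (x : R) :=
    hz.trans (by simpa using map_dvd (Int.castRingHom R) hx)
  have hcop : IsCoprime ((z - 1) ^ 3) (2 : R) := by
    have hl2 : IsCoprime (l : R) (2 : ℕ) := (Nat.coprime_two_right.2 hl).cast
    exact hl2.of_isCoprime_of_dvd_left hz
  have hterms : (z - 1) ^ 3 ∣ ∑ i, (s i : R) *
      (2 * z ^ k i - (2 + 2 * k i * (z - 1) + ((k i : R) ^ 2 - k i) * (z - 1) ^ 2)) :=
    dvd_sum fun i _ => (sub_one_pow_three_dvd_two_mul_pow_sub z (k i)).mul_left _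
  refine hcop.dvd_of_dvd_mul_left ?_
  have hsplit : 2 * ∑ i, (s i : R) * (z ^ k i - 1) = ∑ i, (s i : R) *
      (2 * z ^ k i - (2 + 2 * k i * (z - 1) + ((k i : R) ^ 2 - k i) * (z - 1) ^ 2)) +
      (2 * (z - 1) - (z - 1) ^ 2) * (∑ i, s i * k i : ℤ) +
      (z - 1) ^ 2 * (∑ i, s i * (k i : ℤ) ^ 2 : ℤ) := by
    push_cast
    simp only [mul_sum, ← sum_add_distrib]
    exact sum_congr rfl fun i _ => by ring
  rw [hsplit]
  exact ((hterms.add ((hcast h1).mul_left _)).add ((hcast h2).mul_left _))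

lemma sub_one_pow_totient_dvd_of_isPrimitiveRoot [IsDomain R] {p k : ℕ} (hp : p.Prime) {z : R}
    (hz : IsPrimitiveRoot z (p ^ (k + 1))) : (z - 1) ^ (p ^ (k + 1)).totient ∣ (p : R) := by
  have := Fact.mk hp
  have : NeZero (p ^ (k + 1)) := ⟨pow_ne_zero _ hp.ne_zero⟩
  have hprod : ∏ η ∈ primitiveRoots (p ^ (k + 1)) R, (1 - η) = p := by
    simpa [Polynomial.cyclotomic_eq_prod_X_sub_primitiveRoots hz, Polynomial.eval_prod] using
      Polynomial.eval_one_cyclotomic_prime_pow (R := R) (p := p) k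
  rw [← hprod, ← hz.card_primitiveRoots, ← prod_const]
  refine prod_dvd_prod_of_dvd _ _ fun η hη => ?_
  have hη1 := (isPrimitiveRoot_of_mem_primitiveRoots hη).pow_eq_one
  obtain ⟨i, -, rfl⟩ := hz.eq_pow_of_pow_eq_one hη1
  rw [← dvd_neg, neg_sub]
  exact sub_one_dvd_pow_sub_one z i

end SubOnePowDvd

lemma dvd_of_sq_dvd_squarefree_mul {p d a : ℤ} (hp : Prime p) (hd : Squarefree d)
    (h : p ^ 2 ∣ d * a) : p ∣ a := by
  by_contra hpa
  have hcop : IsCoprime (p ^ 2) a := ((hp.coprime_iff_not_dvd).2 hpa).pow_left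
  exact hp.not_isUnit (hd p (sq p ▸ hcop.dvd_of_dvd_mul_right h))

lemma exists_sum_range_add_pow_mul_of_mem_adjoin {R A : Type*} [CommRing R] [CommRing A]
    [Algebra R A] {x y : A} (hy : y ∈ Algebra.adjoin R {x}) (N : ℕ) :
    ∃ a : ℕ → R, ∃ q ∈ Algebra.adjoin R {x},
      y = ∑ i ∈ range N, algebraMap R A (a i) * x ^ i + x ^ N * q := by
  rw [Algebra.adjoin_singleton_eq_range_aeval] at hy ⊢
  obtain ⟨P, rfl⟩ := hy
  obtain ⟨Q, hQ⟩ : Polynomial.X ^ N ∣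
      P - ∑ i ∈ range N, Polynomial.C (P.coeff i) * Polynomial.X ^ i := by
    rw [Polynomial.X_pow_dvd_iff]
    intro d hd
    simp [Polynomial.coeff_X_pow, hd]
  refine ⟨P.coeff, Polynomial.aeval x Q, ⟨Q, rfl⟩, ?_⟩
  have := congrArg (Polynomial.aeval x) hQ
  simp only [map_sub, map_sum, map_mul, map_pow, Polynomial.aeval_C, Polynomial.aeval_X] at this
  exact sub_eq_iff_eq_add'.1 this

lemma exists_pow_mul_eq_sum_Icc_add_of_mem_adjoin {R A : Type*} [CommRing R] [CommRing A]
    [Algebra R A] {x y : A} (hy : y ∈ Algebra.adjoin R {x}) (m N : ℕ) :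
    ∃ a : ℕ → R, ∃ q ∈ Algebra.adjoin R {x},
      x ^ m * y = ∑ i ∈ Icc m N, algebraMap R A (a i) * x ^ i + x ^ (N + 1) * q := by
  obtain ⟨a, q, hq, rfl⟩ := exists_sum_range_add_pow_mul_of_mem_adjoin hy (N + 1 - m)
  refine ⟨fun i => a (i - m), x ^ (m - (N + 1)) * q,
    mul_mem (pow_mem (Algebra.self_mem_adjoin_singleton R x) _) hq, ?_⟩
  have hexp : m + (N + 1 - m) = N + 1 + (m - (N + 1)) := by lia
  have hIcc : Icc m N = Ico m (N + 1) := rfl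
  rw [hIcc, sum_Ico_eq_sum_range, mul_add, mul_sum, ← mul_assoc, ← mul_assoc, ← pow_add,
    ← pow_add, hexp]
  simp only [Nat.add_sub_cancel_left, pow_add, mul_left_comm]

lemma isIntegral_zpow_of_pow_eq_one {K : Type*} [Field K] {z : K} {M : ℕ} (hM : 0 < M)
    (hz : z ^ M = 1) (k : ℤ) : IsIntegral ℤ (z ^ k) := by
  refine IsIntegral.of_pow hM ?_
  rw [← zpow_natCast, zpow_comm, zpow_natCast, hz, one_zpow]
  exact isIntegral_one

lemma exists_isIntegral_sub_div_one_sub_pow {K : Type*} [Field K] {z : K} {M : ℕ}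
    (hz : IsPrimitiveRoot z M) (hM : 1 < M) {y : K} (hy : y ∈ Algebra.adjoin ℤ {z - 1})
    {x c : K} {e : ℤ} {m : ℕ} (hx : z ^ e * x = c + (z - 1) ^ m * y) (N : ℕ) :
    ∃ a : ℕ → ℤ, IsIntegral ℤ
      ((x - z ^ (-e) * (c + ∑ i ∈ Icc m N, (a i : K) * (z - 1) ^ i)) / (1 - z) ^ (N + 1)) := by
  have hM0 : 0 < M := by lia
  have hz0 : z ^ e ≠ 0 := zpow_ne_zero e (hz.ne_zero hM0.ne')
  have hz1 : (1 - z) ^ (N + 1) ≠ 0 := pow_ne_zero _ (sub_ne_zero.2 (hz.ne_one hM).symm)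
  obtain ⟨a, q, hq, hexpand⟩ := exists_pow_mul_eq_sum_Icc_add_of_mem_adjoin hy m N
  have hq_int : IsIntegral ℤ q :=
    adjoin_le_integralClosure ((hz.isIntegral hM0).sub isIntegral_one) hq
  have hpow : (z - 1) ^ (N + 1) = (-1) ^ (N + 1) * (1 - z) ^ (N + 1) := by
    rw [← mul_pow, neg_one_mul, neg_sub]
  have hquot : (x - z ^ (-e) * (c + ∑ i ∈ Icc m N, (a i : K) * (z - 1) ^ i)) /
      (1 - z) ^ (N + 1) = z ^ (-e) * ((-1) ^ (N + 1) * q) := by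
    rw [hexpand, hpow] at hx
    rw [div_eq_iff hz1, zpow_neg, sub_eq_iff_eq_add]
    refine mul_left_cancel₀ hz0 (hx.trans ?_)
    field_simp
    simp only [algebraMap_int_eq, eq_intCast]
    ring
  refine ⟨a, hquot ▸ ?_⟩
  exact (isIntegral_zpow_of_pow_eq_one hM0 hz.pow_eq_one _).mul
    ((isIntegral_one.neg.pow _).mul hq_int)

lemma two_mem_nonZeroDivisors_zmod {m : ℕ} (hm : Odd m) : 2 ∈ nonZeroDivisors (ZMod m) := by
  have h2 : IsUnit ((2 : ℕ) : ZMod m) :=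
    (ZMod.isUnit_iff_coprime 2 m).2 (Nat.coprime_two_left.2 hm)
  exact_mod_cast h2.mem_nonZeroDivisors

section TwistedSum

variable {F : Type*} [Field F] [Fintype F] [DecidableEq F]

lemma sub_one_pow_three_dvd_sum_quadraticChar_mul_pow {R : Type*} [CommRing R] [IsDomain R]
    {l : ℕ} (hl : l.Prime) (hl2 : l ≠ 2) {z : R} (hz : IsPrimitiveRoot z (l ^ 2))
    {I : F → ZMod (l ^ 2)} (hI : IsIndex I) {g : F} (hg : quadraticChar F g = -1) (hIg : I g = 0)
    (n : ZMod (l ^ 2)) :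
    (z - 1) ^ 3 ∣
      ∑ u, (quadraticChar F (u * (u + 4)) : R) * z ^ (I u + n * I (u + 4)).val + 1 := by
  have : NeZero (l ^ 2) := ⟨pow_ne_zero 2 hl.ne_zero⟩
  have hodd : Odd l := hl.odd_of_ne_two hl2
  have h2 := two_mem_nonZeroDivisors_zmod (hodd.pow (n := 2))
  have hF := ringChar_ne_two_of_quadraticChar_eq_neg_one hg
  have hmass := sum_quadraticChar_mul_add hF (four_ne_zero_of_ringChar_ne_two hF)
  let k (u : F) : ℕ := (I u + n * I (u + 4)).val
  have hk (u : F) : (k u : ZMod (l ^ 2)) = I u + n * I (u + 4) := ZMod.natCast_zmod_val _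
  have hmean : (l : ℤ) ^ 2 ∣ ∑ u, quadraticChar F (u * (u + 4)) * k u := by
    have := hI.sum_quadraticChar_mul_linear h2 hg hIg n
    rw [← Nat.cast_pow, ← ZMod.intCast_zmod_eq_zero_iff_dvd]
    push_cast
    simpa only [hk]
  have hvar : (l : ℤ) ^ 2 ∣ 3 * ∑ u, quadraticChar F (u * (u + 4)) * (k u : ℤ) ^ 2 := by
    have := hI.three_mul_sum_quadraticChar_mul_linear_sq h2 hg hIg n
    rw [← Nat.cast_pow, ← ZMod.intCast_zmod_eq_zero_iff_dvd]
    push_cast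
    simpa only [hk]
  have hzl : (z - 1) ^ 3 ∣ (l : R) := by
    refine (pow_dvd_pow _ ?_).trans (sub_one_pow_totient_dvd_of_isPrimitiveRoot hl hz)
    have hl3 : 3 ≤ l := hl.two_le.lt_of_ne hl2.symm
    rw [Nat.totient_prime_pow_succ hl, pow_one]
    exact hl3.trans (Nat.le_mul_of_pos_right l (by lia))
  have hdvd := sub_one_pow_three_dvd_sum_mul_pow_sub_one hodd hzl _ k
    ((dvd_pow_self _ two_ne_zero).trans hmean)
    (dvd_of_sq_dvd_squarefree_mul (Nat.prime_iff_prime_int.1 hl)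
      Int.prime_three.squarefree hvar)
  simpa only [mul_sub, mul_one, sum_sub_distrib, ← Int.cast_sum, hmass, Int.cast_neg,
    Int.cast_one, sub_neg_eq_add] using hdvd

end TwistedSum

section Character

open AddChar

lemma exists_isIndex_zmodChar_eq {F C : Type*} [MulZeroClass F] [NoZeroDivisors F] [CommMonoid C]
    {M : ℕ} [NeZero M] {z : C} (hz : IsPrimitiveRoot z M) {ψ : F → C}
    (hψmul : ∀ x y, ψ (x * y) = ψ x * ψ y) (hψ : ∀ x, x ≠ 0 → ∃ k : ℕ, ψ x = z ^ k) :
    ∃ I : F → ZMod M, IsIndex I ∧ ∀ x, x ≠ 0 → ψ x = zmodChar M hz.pow_eq_one (I x) := by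
  have hinj : Function.Injective (zmodChar M hz.pow_eq_one) := fun a b hab =>
    ZMod.val_injective M (hz.pow_inj a.val_lt b.val_lt hab)
  choose! ind hind using hψ
  have hI (x : F) (hx : x ≠ 0) : ψ x = zmodChar M hz.pow_eq_one (ind x) := by
    rw [zmodChar_apply', hind x hx]
  refine ⟨fun x => ind x, fun x y hx hy => hinj ?_, hI⟩
  rw [map_add_eq_mul, ← hI x hx, ← hI y hy, ← hI _ (mul_ne_zero hx hy), hψmul]

lemma pow_eq_neg_one_of_isPrimitiveRoot_two_mul {R : Type*} [CommRing R] [IsDomain R] {M : ℕ}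
    (hM : M ≠ 0) {ζ : R} (hζ : IsPrimitiveRoot ζ (2 * M)) : ζ ^ M = -1 :=
  (hζ.pow (by positivity) (mul_comm 2 M)).eq_neg_one_of_two_right

variable {F : Type*} [Field F] [Fintype F] [DecidableEq F]

lemma exists_isIndex_eq_quadraticChar_mul_zmodChar {χ : F →*₀ ℂ} {γ : F} {ζ : ℂ} {M : ℕ}
    [NeZero M] (hM : Odd M) (hF : ringChar F ≠ 2) (hγ : ∀ x : F, x ≠ 0 → ∃ k : ℕ, γ ^ k = x)
    (hζ : IsPrimitiveRoot ζ (2 * M)) (hζ2 : IsPrimitiveRoot (ζ ^ 2) M) (hχγ : χ γ = ζ) :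
    ∃ I : F → ZMod M, IsIndex I ∧
      ∀ x, x ≠ 0 → χ x = (quadraticChar F x : ℂ) * zmodChar M hζ2.pow_eq_one (I x) := by
  have hpow : ∀ x, x ≠ 0 → ∃ k : ℕ, (quadraticChar F x : ℂ) * χ x = (ζ ^ 2) ^ k := by
    intro x hx
    obtain ⟨k, rfl⟩ := hγ x hx
    obtain ⟨h, hh⟩ := hM
    have hsq : (-1) * ζ = (ζ ^ 2) ^ (h + 1) := by
      rw [← pow_eq_neg_one_of_isPrimitiveRoot_two_mul (NeZero.ne M) hζ, hh]
      ring
    refine ⟨(h + 1) * k, ?_⟩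
    rw [pow_mul, ← hsq, map_pow, map_pow, quadraticChar_eq_neg_one_of_forall_exists_pow hF hγ,
      hχγ, mul_pow]
    push_cast
    rfl
  let ψ : F → ℂ := fun x => (quadraticChar F x : ℂ) * χ x
  have hψmul (x y : F) : ψ (x * y) = ψ x * ψ y := by
    simp only [ψ, map_mul, Int.cast_mul]
    ring
  obtain ⟨I, hI, hIψ⟩ := exists_isIndex_zmodChar_eq hζ2 hψmul hpow
  refine ⟨I, hI, fun x hx => ?_⟩
  have hsq : (quadraticChar F x : ℂ) ^ 2 = 1 := by exact_mod_cast quadraticChar_sq_one hx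
  rw [← hIψ x hx]
  linear_combination -χ x * hsq

lemma map_zpow_mul_jSum (χ : F →*₀ ℂ) {c : F} (hc : c ≠ 0) (i j : ℤ) :
    χ c ^ (i + j) * jSum χ i j = ∑ u, charPow χ i u * charPow χ j (u + c) := by
  have hχc : χ c ≠ 0 := (map_ne_zero χ).2 hc
  have hscale (i : ℤ) (v : F) : charPow χ i (c * v) = χ c ^ i * charPow χ i v := by
    simp [charPow, hc, mul_zpow]
  calc χ c ^ (i + j) * jSum χ i j
      = ∑ v, charPow χ i (c * v) * charPow χ j (c * v + c) := by
        rw [jSum, mul_sum]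
        refine sum_congr rfl fun v _ => ?_
        rw [← mul_add_one, hscale, hscale, zpow_add₀ hχc]
        ring
    _ = ∑ u, charPow χ i u * charPow χ j (u + c) :=
        Equiv.sum_comp (Equiv.mulLeft₀ c hc) fun u => charPow χ i u * charPow χ j (u + c)

lemma charPow_eq_quadraticChar_mul_zmodChar {χ : F → ℂ} {M : ℕ} [NeZero M] {z : ℂ} (hz : z ^ M = 1)
    {I : F → ZMod M} (hχ : ∀ x, x ≠ 0 → χ x = (quadraticChar F x : ℂ) * zmodChar M hz (I x))
    {n : ℤ} (hn : Odd n) (x : F) :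
    charPow χ n x = (quadraticChar F x : ℂ) * zmodChar M hz (n * I x) := by
  rcases eq_or_ne x 0 with rfl | hx
  · simp [charPow]
  have hodd : (quadraticChar F x : ℂ) ^ n = quadraticChar F x := by
    rcases quadraticChar_dichotomy hx with h | h <;> simp [h, hn.neg_one_zpow]
  rw [charPow, if_neg hx, hχ x hx, mul_zpow, hodd, ← zsmul_eq_mul (I x) n, map_zsmul_eq_zpow]

lemma sum_charPow_mul_charPow_add {χ : F → ℂ} {M : ℕ} [NeZero M] {z : ℂ} (hz : z ^ M = 1)
    {I : F → ZMod M} (hχ : ∀ x, x ≠ 0 → χ x = (quadraticChar F x : ℂ) * zmodChar M hz (I x))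
    {n : ℤ} (hn : Odd n) (c : F) :
    ∑ u, charPow χ 1 u * charPow χ n (u + c) =
      ∑ u, (quadraticChar F (u * (u + c)) : ℂ) * z ^ (I u + n * I (u + c)).val := by
  refine sum_congr rfl fun u _ => ?_
  rw [charPow_eq_quadraticChar_mul_zmodChar hz hχ odd_one,
    charPow_eq_quadraticChar_mul_zmodChar hz hχ hn, ← zmodChar_apply hz, map_add_eq_mul,
    map_mul (quadraticChar F), Int.cast_mul, Int.cast_one, one_mul]
  ring

end Character

lemma exists_zpow_mul_jSum_eq_neg_one_add {F : Type*} [Field F] [Fintype F] [DecidableEq F]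
    {l : ℕ} (hl : l.Prime) (hl2 : l ≠ 2) {γ : F} (hγ : ∀ x : F, x ≠ 0 → ∃ k : ℕ, γ ^ k = x)
    {ζ : ℂ} (hζ : IsPrimitiveRoot ζ (2 * l ^ 2)) {χ : F →*₀ ℂ} (hχγ : χ γ = ζ)
    {w : ℤ} (hw : γ ^ w = 2) {n : ℤ} (hn : Odd n) {A : Subalgebra ℤ ℂ} (hA : ζ ^ 2 ∈ A) :
    ∃ y ∈ A, (ζ ^ 2) ^ (w * (n + 1)) * jSum χ 1 n = -1 + (ζ ^ 2 - 1) ^ 3 * y := by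
  have hM : Odd (l ^ 2) := (hl.odd_of_ne_two hl2).pow
  have : NeZero (l ^ 2) := ⟨pow_ne_zero 2 hl.ne_zero⟩
  have hζ2 : IsPrimitiveRoot (ζ ^ 2) (l ^ 2) := hζ.pow (NeZero.pos _) rfl
  have hγ0 : γ ≠ 0 := (map_ne_zero χ).1 (hχγ ▸ hζ.ne_zero (NeZero.ne _))
  have hF : ringChar F ≠ 2 := fun hchar => by
    have := ringChar.of_eq hchar
    exact zpow_ne_zero w hγ0 (hw.trans CharTwo.two_eq_zero)
  have hχ4 : χ 4 = (ζ ^ 2) ^ w := by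
    have h4 : (γ ^ w) ^ (2 : ℤ) = 4 := by rw [hw]; norm_num
    rw [← h4, map_zpow₀, map_zpow₀, hχγ, zpow_comm]
    norm_cast
  obtain ⟨I, hI, hχI⟩ := exists_isIndex_eq_quadraticChar_mul_zmodChar hM hF hγ hζ hζ2 hχγ
  have hnonsq : quadraticChar F (γ ^ l ^ 2) = -1 := by
    rw [map_pow, quadraticChar_eq_neg_one_of_forall_exists_pow hF hγ, hM.neg_one_pow]
  have hIγ : I (γ ^ l ^ 2) = 0 := by rw [hI.map_pow hγ0, nsmul_eq_mul, ZMod.natCast_self, zero_mul]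
  have hz : IsPrimitiveRoot (⟨ζ ^ 2, hA⟩ : A) (l ^ 2) :=
    IsPrimitiveRoot.coe_submonoidClass_iff.1 hζ2
  obtain ⟨y, hy⟩ :=
    sub_one_pow_three_dvd_sum_quadraticChar_mul_pow hl hl2 hz hI hnonsq hIγ (n : ZMod (l ^ 2))
  refine ⟨y, y.2, ?_⟩
  rw [zpow_mul, ← hχ4, add_comm n, map_zpow_mul_jSum χ (four_ne_zero_of_ringChar_ne_two hF),
    sum_charPow_mul_charPow_add hζ2.pow_eq_one hχI hn]
  have hyℂ := congrArg A.val hy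
  simp only [map_add, map_sum, map_mul A.val, map_pow, map_sub, map_one, map_intCast,
    A.coe_val] at hyℂ
  exact eq_neg_add_of_add_eq ((add_comm _ _).trans hyℂ)

theorem jacobiSum_coprime_congruence_general {F : Type*} [Field F] [Fintype F] [DecidableEq F]
    {l : ℕ} (hl : l.Prime) (hl2 : l ≠ 2) {γ : F} (hγ : ∀ x : F, x ≠ 0 → ∃ k : ℕ, γ ^ k = x)
    {ζ : ℂ} (hζ : IsPrimitiveRoot ζ (2 * l ^ 2)) {χ : F → ℂ} (hχ0 : χ 0 = 0) (hχγ : χ γ = ζ)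
    (hχmul : ∀ x y : F, χ (x * y) = χ x * χ y) {w : ℤ} (hw : γ ^ w = 2) {n : ℤ} (hn : Odd n)
    (N : ℕ) :
    ∃ a : ℕ → ℤ, IsIntegral ℤ ((jSum χ 1 n - (ζ ^ 2) ^ (-(w * (n + 1))) *
      (-1 + ∑ i ∈ Icc 3 N, (a i : ℂ) * (ζ ^ 2 - 1) ^ i)) / (1 - ζ ^ 2) ^ (N + 1)) := by
  have hζ0 : ζ ≠ 0 := hζ.ne_zero (by have := hl.ne_zero; positivity)
  have hχ1 : χ 1 = 1 := by
    have h := hχmul 1 γ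
    rwa [one_mul, hχγ, eq_comm, mul_eq_right₀ hζ0] at h
  let χ₀ : F →*₀ ℂ := { toFun := χ, map_zero' := hχ0, map_one' := hχ1, map_mul' := hχmul }
  have hl1 : 1 < l ^ 2 := Nat.one_lt_pow two_ne_zero hl.one_lt
  have hζ2 : IsPrimitiveRoot (ζ ^ 2) (l ^ 2) := hζ.pow (by lia) rfl
  have hmem : ζ ^ 2 ∈ Algebra.adjoin ℤ {ζ ^ 2 - 1} := by
    have h := add_mem (Algebra.self_mem_adjoin_singleton ℤ (ζ ^ 2 - 1)) (one_mem _)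
    rwa [sub_add_cancel (ζ ^ 2) 1] at h
  obtain ⟨y, hy, hJ⟩ :=
    exists_zpow_mul_jSum_eq_neg_one_add (χ := χ₀) hl hl2 hγ hζ hχγ hw hn hmem
  exact exists_isIntegral_sub_div_one_sub_pow hζ2 hl1 hy hJ N

theorem jacobiSum_coprime_congruence {F : Type*} [Field F] [Fintype F] [DecidableEq F]
    (l p r q : ℕ) (hl : l.Prime) (hl3 : 3 ≤ l) (hp : p.Prime) (hr : 0 < r)
    (hq : q = p ^ r) (hql : q % (2 * l ^ 2) = 1) (hcard : Fintype.card F = q)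
    (γ : F) (hγ : ∀ x : F, x ≠ 0 → ∃ k : ℕ, γ ^ k = x)
    (ζ : ℂ) (hζ : ζ = Complex.exp (2 * Real.pi * Complex.I / ((2 * l ^ 2 : ℕ) : ℂ)))
    (ζl : ℂ) (hζl : ζl = ζ ^ 2)
    (χ : F → ℂ) (hχ0 : χ 0 = 0) (hχγ : χ γ = ζ)
    (hχmul : ∀ x y : F, χ (x * y) = χ x * χ y)
    (w : ℤ) (hw : γ ^ w = 2)
    (n : ℤ) (hn1 : 1 ≤ n) (hn2 : n < 2 * (l : ℤ) ^ 2 - 1) (hnodd : Odd n)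
    (hncop : IsCoprime n (2 * (l : ℤ) ^ 2)) :
    ∃ a b c : ℕ → ℤ,
      IsIntegral ℤ ((jSum χ 1 n -
          ζl ^ (-(w * (n + 1))) *
            (-1 + ∑ i ∈ Finset.Icc 3 l, (a i : ℂ) * (ζl - 1) ^ i) *
            (-1 + ∑ i ∈ Finset.Icc 3 l, (b i : ℂ) * (ζl ^ n - 1) ^ i) *
            (-1 + ∑ i ∈ Finset.Icc 3 l, (c i : ℂ) * (ζl ^ ((1 - (l : ℤ) ^ 2) / 2) - 1) ^ i)) /
        (1 - ζl) ^ (l + 1)) := by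
  have hprim : IsPrimitiveRoot ζ (2 * l ^ 2) :=
    hζ ▸ isPrimitiveRoot_exp _ (mul_ne_zero two_ne_zero (pow_ne_zero 2 hl.ne_zero))
  obtain ⟨a, ha⟩ := jacobiSum_coprime_congruence_general hl (by lia) hγ hprim hχ0 hχγ hχmul hw
    hnodd l
  exact ⟨a, 0, 0, by simpa [hζl] using ha⟩
end
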